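/- Let G = ∫₀¹ (arctan x)/x dx denote Catalan's constant (equivalently, G = (1/2)·∫₀^{π/2} x/(sin x) dx). Then (√15/4)·ln((4·cos(√15·π/10) + 3·sin(√15·π/10) + 5)/(4·cos(√15·π/10) − 3·sin(√15·π/10) + 5)) < G < (√15/5)·ln((11·√(2 − √2) + 3·√15·√(√2 + 2) + 32)/(11·√(2 − √2) − 3·√15·√(√2 + 2) + 32)). -/

import Mathlib

open Real

/-!
The substitution `x = tan (t / 2)` gives `G = ½ ∫₀^{π/2} (sinc t)⁻¹ dt`. Compare `sinc` with
`1 - (1 - cos (a t)) / (3 a²) = 1 - t²/6 + a² t⁴/72 - ⋯`, whose reciprocal has an elementary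
primitive. Since `sinc t = 1 - t²/6 + t⁴/120 - ⋯`, the critical frequency is `a² = 3/5`: there the
quartic terms agree and the sextic ones make the comparison function too large, which bounds `G`
from below, while at the smaller frequency `a = 3/4` it is too small on `(0, π/2]`, which bounds
`G` from above.
-/

open Set intervalIntegral

open scoped Nat

/-- The sum of the first `n` nonzero terms of the Maclaurin series of `cos`. -/
noncomputable def cosTaylor (n : ℕ) (x : ℝ) : ℝ :=
  ∑ k ∈ Finset.range n, (-1) ^ k * x ^ (2 * k) / (2 * k)!

/-- The sum of the first `n` nonzero terms of the Maclaurin series of `sin`. -/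
noncomputable def sinTaylor (n : ℕ) (x : ℝ) : ℝ :=
  ∑ k ∈ Finset.range n, (-1) ^ k * x ^ (2 * k + 1) / (2 * k + 1)!

lemma hasDerivAt_pow_succ_div_factorial (n : ℕ) (x : ℝ) :
    HasDerivAt (fun x : ℝ ↦ x ^ (n + 1) / (n + 1)!) (x ^ n / n !) x := by
  refine ((hasDerivAt_pow (n + 1) x).div_const _).congr_deriv ?_
  rw [Nat.factorial_succ]
  push_cast
  field_simp

lemma hasDerivAt_sinTaylor (n : ℕ) (x : ℝ) : HasDerivAt (sinTaylor n) (cosTaylor n x) x := by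
  unfold sinTaylor cosTaylor
  simp only [mul_div_assoc]
  exact HasDerivAt.fun_sum fun k _ ↦ (hasDerivAt_pow_succ_div_factorial (2 * k) x).const_mul _

lemma cosTaylor_succ (n : ℕ) (x : ℝ) :
    cosTaylor (n + 1) x =
      1 - ∑ k ∈ Finset.range n, (-1) ^ k * (x ^ (2 * k + 1 + 1) / (2 * k + 1 + 1)!) := by
  rw [cosTaylor, Finset.sum_range_succ', sub_eq_neg_add, ← Finset.sum_neg_distrib]
  congr 1
  · refine Finset.sum_congr rfl fun k _ ↦ ?_
    rw [mul_add_one 2 k, pow_succ, mul_neg_one, neg_mul, neg_div, mul_div_assoc]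
  · simp

lemma hasDerivAt_cosTaylor_succ (n : ℕ) (x : ℝ) :
    HasDerivAt (cosTaylor (n + 1)) (-sinTaylor n x) x := by
  rw [funext (cosTaylor_succ n)]
  unfold sinTaylor
  simp only [mul_div_assoc]
  exact (HasDerivAt.fun_sum fun k _ ↦
    (hasDerivAt_pow_succ_div_factorial (2 * k + 1) x).const_mul _).const_sub 1

lemma nonneg_of_hasDerivAt_nonneg {f f' : ℝ → ℝ} (h0 : f 0 = 0)
    (hf : ∀ x, HasDerivAt f (f' x) x) (hf' : ∀ x, 0 ≤ x → 0 ≤ f' x) {x : ℝ} (hx : 0 ≤ x) :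
    0 ≤ f x := by
  have hmono : MonotoneOn f (Ici 0) :=
    monotoneOn_of_hasDerivWithinAt_nonneg (f' := f') (convex_Ici 0)
      (fun y _ ↦ (hf y).continuousAt.continuousWithinAt) (fun y _ ↦ (hf y).hasDerivWithinAt)
      (fun y hy ↦ hf' y (interior_subset hy))
  exact h0 ▸ hmono self_mem_Ici hx hx

lemma neg_one_pow_mul_sin_sub_sinTaylor_nonneg_of_cos {n : ℕ}
    (hcos : ∀ x, 0 ≤ x → 0 ≤ (-1) ^ n * (cos x - cosTaylor n x)) {x : ℝ} (hx : 0 ≤ x) :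
    0 ≤ (-1) ^ n * (sin x - sinTaylor n x) :=
  nonneg_of_hasDerivAt_nonneg (by simp [sinTaylor])
    (fun y ↦ ((hasDerivAt_sin y).sub (hasDerivAt_sinTaylor n y)).const_mul _) hcos hx

lemma neg_one_pow_mul_cos_sub_cosTaylor_nonneg (n : ℕ) :
    ∀ x, 0 ≤ x → 0 ≤ (-1) ^ (n + 1) * (cos x - cosTaylor (n + 1) x) := by
  induction n with
  | zero => exact fun x _ ↦ by simp [cosTaylor, cos_le_one x]
  | succ n ih =>
    refine fun x hx ↦ nonneg_of_hasDerivAt_nonneg (by simp [cosTaylor_succ])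
      (fun y ↦ ((hasDerivAt_cos y).sub (hasDerivAt_cosTaylor_succ (n + 1) y)).const_mul _)
      (fun y hy ↦ ?_) hx
    have hsin := neg_one_pow_mul_sin_sub_sinTaylor_nonneg_of_cos ih hy
    linear_combination hsin

lemma cos_le_quartic {x : ℝ} (hx : 0 ≤ x) : cos x ≤ 1 - x ^ 2 / 2 + x ^ 4 / 24 := by
  have h := neg_one_pow_mul_cos_sub_cosTaylor_nonneg 2 x hx
  norm_num [cosTaylor, Finset.sum_range_succ, Nat.factorial] at h
  linarith

lemma sextic_le_cos {x : ℝ} (hx : 0 ≤ x) :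
    1 - x ^ 2 / 2 + x ^ 4 / 24 - x ^ 6 / 720 ≤ cos x := by
  have h := neg_one_pow_mul_cos_sub_cosTaylor_nonneg 3 x hx
  norm_num [cosTaylor, Finset.sum_range_succ, Nat.factorial] at h
  linarith

lemma septic_le_sin {x : ℝ} (hx : 0 ≤ x) :
    x - x ^ 3 / 6 + x ^ 5 / 120 - x ^ 7 / 5040 ≤ sin x := by
  have h := neg_one_pow_mul_sin_sub_sinTaylor_nonneg_of_cos
    (neg_one_pow_mul_cos_sub_cosTaylor_nonneg 3) hx
  norm_num [sinTaylor, Finset.sum_range_succ, Nat.factorial] at h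
  linarith

lemma sin_le_nonic {x : ℝ} (hx : 0 ≤ x) :
    sin x ≤ x - x ^ 3 / 6 + x ^ 5 / 120 - x ^ 7 / 5040 + x ^ 9 / 362880 := by
  have h := neg_one_pow_mul_sin_sub_sinTaylor_nonneg_of_cos
    (neg_one_pow_mul_cos_sub_cosTaylor_nonneg 4) hx
  norm_num [sinTaylor, Finset.sum_range_succ, Nat.factorial] at h
  linarith

lemma sinc_pos {x : ℝ} (hx : x ∈ Ico 0 π) : 0 < sinc x := by
  rcases hx.1.eq_or_lt with rfl | hx0
  · simp
  · rw [sinc_of_ne_zero hx0.ne']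
    exact div_pos (sin_pos_of_pos_of_lt_pi hx0 hx.2) hx0

/-- The function `α + β cos (a x)` agreeing with `sinc x` to third order at `0`, which serves as an
approximation to `sinc` with an elementary integral of the reciprocal. The frequency `a` should
be nonzero: `a = 0` gives the constant `1`. -/
noncomputable def sincApprox (a x : ℝ) : ℝ := 1 - (1 - cos (a * x)) / (3 * a ^ 2)

section sincApprox

variable {a x : ℝ}

lemma continuous_sincApprox (a : ℝ) : Continuous (sincApprox a) := by
  unfold sincApprox
  fun_prop

lemma sincApprox_eq_div (ha : a ≠ 0) (x : ℝ) :
    sincApprox a x = (3 * a ^ 2 - 1 + cos (a * x)) / (3 * a ^ 2) := by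
  unfold sincApprox
  field_simp
  ring

lemma sincApprox_pos (ha0 : 0 ≤ a) (ha1 : a ≤ 1) (ha : 1 < 3 * a ^ 2)
    (hx : x ∈ Icc 0 (π / 2)) : 0 < sincApprox a x := by
  have hcos : 0 ≤ cos (a * x) :=
    cos_nonneg_of_neg_pi_div_two_le_of_le (by nlinarith [hx.1, pi_pos]) (by nlinarith [hx.1, hx.2])
  have hdiv : (1 - cos (a * x)) / (3 * a ^ 2) < 1 := by
    rw [div_lt_one (by linarith)]
    linarith
  exact sub_pos.2 hdiv

-- The hypothesis `hax` is `a² / 72 < 1 / 120 - x² / 5040` with the denominators cleared.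
lemma sincApprox_lt_sinc (ha : 0 < a) (hx : 0 < x) (hax : 70 * a ^ 2 + x ^ 2 < 42) :
    sincApprox a x < sinc x := by
  have hcos := cos_le_quartic (mul_pos ha hx).le
  calc sincApprox a x ≤ 1 - x ^ 2 / 6 + a ^ 2 * x ^ 4 / 72 := by
        rw [sincApprox_eq_div ha.ne', div_le_iff₀ (by positivity)]
        linear_combination hcos
    _ < 1 - x ^ 2 / 6 + x ^ 4 / 120 - x ^ 6 / 5040 := by
        linear_combination x ^ 4 / 5040 * hax
    _ ≤ sinc x := by
        rw [sinc_of_ne_zero hx.ne', le_div_iff₀ hx]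
        linear_combination septic_le_sin hx.le

lemma sinc_lt_sincApprox (ha : 0 < a) (ha2 : a ^ 2 = 3 / 5) (hx : 0 < x) (hxπ : x ≤ π) :
    sinc x < sincApprox a x := by
  have hcos := sextic_le_cos (mul_pos ha hx).le
  have hx2 : x ^ 2 < 10 := by nlinarith [pi_lt_d2]
  calc sinc x ≤ 1 - x ^ 2 / 6 + x ^ 4 / 120 - x ^ 6 / 5040 + x ^ 8 / 362880 := by
        rw [sinc_of_ne_zero hx.ne', div_le_iff₀ hx]
        linear_combination sin_le_nonic hx.le
    _ < 1 - x ^ 2 / 6 + x ^ 4 / 120 - x ^ 6 / 6000 := by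
        have hx6 : 0 < x ^ 6 := by positivity
        linear_combination x ^ 6 / 362880 * hx2 + (1 / 31500 - 1 / 36288) * hx6
    _ = 1 - x ^ 2 / 6 + a ^ 2 * x ^ 4 / 72 - a ^ 4 * x ^ 6 / 2160 := by
        rw [show a ^ 4 = (a ^ 2) ^ 2 by ring, ha2]
        ring
    _ ≤ sincApprox a x := by
        rw [sincApprox_eq_div ha.ne', le_div_iff₀ (by positivity)]
        linear_combination hcos

end sincApprox

section logRatio

variable {p s t : ℝ}

-- With `p = cos β` and `s = sin β`, the two factors are `1 + cos (t - β)` and `1 + cos (t + β)`.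
lemma one_add_mul_cos_add_mul_sin_mul_sub (hps : p ^ 2 + s ^ 2 = 1) :
    (1 + p * cos t + s * sin t) * (1 + p * cos t - s * sin t) = (p + cos t) ^ 2 := by
  linear_combination -(1 - cos t ^ 2) * hps - s ^ 2 * sin_sq_add_cos_sq t

lemma one_add_mul_cos_add_mul_sin_pos (hps : p ^ 2 + s ^ 2 = 1) (ht : p + cos t ≠ 0) :
    0 < 1 + p * cos t + s * sin t := by
  have hnonneg : 0 ≤ 1 + p * cos t + s * sin t := by
    nlinarith [sq_nonneg (p + cos t), sq_nonneg (s + sin t), sin_sq_add_cos_sq t]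
  refine hnonneg.lt_of_ne' fun hzero ↦ pow_ne_zero 2 ht ?_
  rw [← one_add_mul_cos_add_mul_sin_mul_sub hps, hzero, zero_mul]

lemma hasDerivAt_log_one_add_mul_cos_add_mul_sin (hps : p ^ 2 + s ^ 2 = 1)
    (ht : p + cos t ≠ 0) :
    HasDerivAt (fun t ↦ log ((1 + p * cos t + s * sin t) / (1 + p * cos t - s * sin t)))
      (2 * s / (p + cos t)) t := by
  have hnum := one_add_mul_cos_add_mul_sin_pos hps ht
  have hden : 0 < 1 + p * cos t - s * sin t := by
    simpa [sub_eq_add_neg] using one_add_mul_cos_add_mul_sin_pos (s := -s) (by simpa using hps) ht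
  have hcos := ((hasDerivAt_cos t).const_mul p).const_add 1
  have hsin := (hasDerivAt_sin t).const_mul s
  refine (((hcos.add hsin).div (hcos.sub hsin) hden.ne').log (div_pos hnum hden).ne').congr_deriv ?_
  have hwronskian : (p * -sin t + s * cos t) * (1 + p * cos t - s * sin t) -
      (1 + p * cos t + s * sin t) * (p * -sin t - s * cos t) = 2 * s * (p + cos t) := by
    linear_combination 2 * s * p * sin_sq_add_cos_sq t
  simp only [Pi.add_apply, Pi.sub_apply, Pi.div_apply]
  rw [hwronskian, div_div, sq, mul_assoc (_ - _), mul_div_cancel₀ _ hden.ne', mul_comm (_ - _),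
    one_add_mul_cos_add_mul_sin_mul_sub hps]
  field_simp

end logRatio

lemma integral_inv_sincApprox {a s b : ℝ} (ha : a ≠ 0) (hs : s ≠ 0)
    (has : (3 * a ^ 2 - 1) ^ 2 + s ^ 2 = 1) (hb : ∀ x ∈ uIcc 0 b, sincApprox a x ≠ 0) :
    ∫ x in 0..b, (sincApprox a x)⁻¹ =
      3 * a / (2 * s) *
        log ((1 + (3 * a ^ 2 - 1) * cos (a * b) + s * sin (a * b)) /
          (1 + (3 * a ^ 2 - 1) * cos (a * b) - s * sin (a * b))) := by
  have hderiv : ∀ x ∈ uIcc 0 b, HasDerivAt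
      (fun x ↦ 3 * a / (2 * s) *
        log ((1 + (3 * a ^ 2 - 1) * cos (a * x) + s * sin (a * x)) /
          (1 + (3 * a ^ 2 - 1) * cos (a * x) - s * sin (a * x))))
      (sincApprox a x)⁻¹ x := by
    intro x hx
    have hne : 3 * a ^ 2 - 1 + cos (a * x) ≠ 0 := by
      intro hzero
      exact hb x hx (by rw [sincApprox_eq_div ha, hzero, zero_div])
    refine (((hasDerivAt_log_one_add_mul_cos_add_mul_sin has hne).comp x
      (hasDerivAt_const_mul a)).const_mul _).congr_deriv ?_
    rw [sincApprox_eq_div ha]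
    field_simp
  have hint : IntervalIntegrable (fun x ↦ (sincApprox a x)⁻¹) MeasureTheory.volume 0 b :=
    ((continuous_sincApprox a).continuousOn.inv₀ hb).intervalIntegrable
  rw [integral_eq_sub_of_hasDerivAt hderiv hint]
  simp

lemma integral_inv_lt_integral_inv {f g : ℝ → ℝ} {a b : ℝ} (hab : a < b)
    (hf : ContinuousOn f (Icc a b)) (hg : ContinuousOn g (Icc a b))
    (hf0 : ∀ x ∈ Icc a b, 0 < f x) (hg0 : ∀ x ∈ Icc a b, 0 < g x)
    (hfg : ∀ x ∈ Ioc a b, f x < g x) :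
    ∫ x in a..b, (g x)⁻¹ < ∫ x in a..b, (f x)⁻¹ := by
  have hlt : ∀ x ∈ Ioc a b, (g x)⁻¹ < (f x)⁻¹ := fun x hx ↦
    inv_strictAnti₀ (hf0 x (Ioc_subset_Icc_self hx)) (hfg x hx)
  exact integral_lt_integral_of_continuousOn_of_le_of_exists_lt hab
    (hg.inv₀ fun x hx ↦ (hg0 x hx).ne') (hf.inv₀ fun x hx ↦ (hf0 x hx).ne')
    (fun x hx ↦ (hlt x hx).le) ⟨b, right_mem_Icc.2 hab.le, hlt b (right_mem_Ioc.2 hab)⟩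

lemma integral_arctan_div_self {b : ℝ} (hb0 : 0 ≤ b) (hb : b < π) :
    ∫ x in 0..tan (b / 2), arctan x / x = 1 / 2 * ∫ t in 0..b, (sinc t)⁻¹ := by
  have hcos : ∀ t ∈ uIcc 0 b, 0 < cos (t / 2) := by
    intro t ht
    rw [uIcc_of_le hb0] at ht
    exact cos_pos_of_mem_Ioo ⟨by linarith [ht.1, pi_pos], by linarith [ht.2]⟩
  have hderiv : ∀ t ∈ uIcc 0 b,
      HasDerivAt (fun t ↦ tan (t / 2)) (1 / cos (t / 2) ^ 2 * (1 / 2)) t := fun t ht ↦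
    (hasDerivAt_tan (hcos t ht).ne').comp (h₂ := tan) t ((hasDerivAt_id' t).div_const 2)
  have hsubst := integral_comp_mul_deriv_of_deriv_nonneg (g := fun x ↦ arctan x / x)
    (fun t ht ↦ (hderiv t ht).continuousAt.continuousWithinAt)
    (fun t ht ↦ hderiv t (Ioo_subset_Icc_self ht)) (fun t _ ↦ by positivity)
  rw [zero_div, tan_zero] at hsubst
  rw [← hsubst, ← integral_const_mul]
  refine integral_congr_Ioo_of_le hb0 fun t ht ↦ ?_
  have hcos0 : cos (t / 2) ≠ 0 := (hcos t (Ioo_subset_Icc_self.trans Icc_subset_uIcc ht)).ne'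
  have hsin0 : sin (t / 2) ≠ 0 :=
    (sin_pos_of_pos_of_lt_pi (by linarith [ht.1]) (by linarith [ht.1, ht.2])).ne'
  have hsin : sin t = 2 * sin (t / 2) * cos (t / 2) := by
    rw [← sin_two_mul, mul_div_cancel₀ t two_ne_zero]
  simp only [Function.comp_apply]
  rw [arctan_tan (by linarith [ht.1, pi_pos]) (by linarith [ht.2]), tan_eq_sin_div_cos,
    sinc_of_ne_zero ht.1.ne', hsin]
  field_simp

lemma integral_zero_one_arctan_div_self :
    ∫ x in (0 : ℝ)..1, arctan x / x = 1 / 2 * ∫ t in 0..π / 2, (sinc t)⁻¹ := by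
  rw [← integral_arctan_div_self (by positivity) (by linarith [pi_pos]),
    show π / 2 / 2 = π / 4 by ring, tan_pi_div_four]

lemma sqrt_fifteen_div_five_sq : (√15 / 5) ^ 2 = 3 / 5 := by
  norm_num [div_pow]

lemma sincApprox_sqrt_fifteen_div_five_pos {x : ℝ} (hx : x ∈ Icc 0 (π / 2)) :
    0 < sincApprox (√15 / 5) x := by
  have hsq := sqrt_fifteen_div_five_sq
  exact sincApprox_pos (by positivity) (by nlinarith) (by linarith) hx

lemma sincApprox_three_fourths_pos {x : ℝ} (hx : x ∈ Icc 0 (π / 2)) :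
    0 < sincApprox (3 / 4) x :=
  sincApprox_pos (by norm_num) (by norm_num) (by norm_num) hx

lemma half_integral_inv_sincApprox_sqrt_fifteen_div_five :
    1 / 2 * ∫ x in 0..π / 2, (sincApprox (√15 / 5) x)⁻¹ =
      √15 / 4 *
        log ((4 * cos (√15 * π / 10) + 3 * sin (√15 * π / 10) + 5) /
          (4 * cos (√15 * π / 10) - 3 * sin (√15 * π / 10) + 5)) := by
  have hsq := sqrt_fifteen_div_five_sq
  have hne : ∀ x ∈ uIcc 0 (π / 2), sincApprox (√15 / 5) x ≠ 0 := by
    rw [uIcc_of_le (by positivity)]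
    exact fun x hx ↦ (sincApprox_sqrt_fifteen_div_five_pos hx).ne'
  have hangle : √15 / 5 * (π / 2) = √15 * π / 10 := by ring
  rw [integral_inv_sincApprox (s := 3 / 5) (by positivity) (by norm_num) (by norm_num [hsq]) hne,
    ← mul_assoc, hsq, hangle]
  congr 1
  · ring
  · rw [← mul_div_mul_left _ _ (by norm_num : (5 : ℝ) ≠ 0)]
    ring_nf

lemma half_integral_inv_sincApprox_three_fourths :
    1 / 2 * ∫ x in 0..π / 2, (sincApprox (3 / 4) x)⁻¹ =
      √15 / 5 *
        log ((11 * √(2 - √2) + 3 * √15 * √(√2 + 2) + 32) /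
          (11 * √(2 - √2) - 3 * √15 * √(√2 + 2) + 32)) := by
  have hsq : √15 ^ 2 = 15 := sq_sqrt (by norm_num)
  have hne : ∀ x ∈ uIcc 0 (π / 2), sincApprox (3 / 4) x ≠ 0 := by
    rw [uIcc_of_le (by positivity)]
    exact fun x hx ↦ (sincApprox_three_fourths_pos hx).ne'
  have hangle : 3 / 4 * (π / 2) = π / 2 - π / 8 := by ring
  rw [integral_inv_sincApprox (s := 3 * √15 / 16) (by norm_num) (by positivity)
    (by linear_combination 9 / 256 * hsq) hne, ← mul_assoc, hangle, cos_pi_div_two_sub,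
    sin_pi_div_two_sub, sin_pi_div_eight, cos_pi_div_eight, add_comm 2 √2]
  congr 1
  · field_simp
    linear_combination -16 * hsq
  · rw [← mul_div_mul_left _ _ (by norm_num : (32 : ℝ) ≠ 0)]
    ring_nf

/-- Estimates for Catalan's constant `G = ∫₀¹ (arctan x)/x dx`:
`(√15/4)·ln((4cos(√15π/10) + 3sin(√15π/10) + 5)/(4cos(√15π/10) − 3sin(√15π/10) + 5))
 < G < (√15/5)·ln((11√(2−√2) + 3√15·√(√2+2) + 32)/(11√(2−√2) − 3√15·√(√2+2) + 32))`. -/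
theorem stmt_17 :
    Real.sqrt 15 / 4 *
        Real.log ((4 * Real.cos (Real.sqrt 15 * π / 10) + 3 * Real.sin (Real.sqrt 15 * π / 10) + 5) /
          (4 * Real.cos (Real.sqrt 15 * π / 10) - 3 * Real.sin (Real.sqrt 15 * π / 10) + 5)) <
      (∫ x in (0 : ℝ)..1, Real.arctan x / x) ∧
    (∫ x in (0 : ℝ)..1, Real.arctan x / x) <
      Real.sqrt 15 / 5 *
        Real.log ((11 * Real.sqrt (2 - Real.sqrt 2) + 3 * Real.sqrt 15 * Real.sqrt (Real.sqrt 2 + 2) + 32) /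
          (11 * Real.sqrt (2 - Real.sqrt 2) - 3 * Real.sqrt 15 * Real.sqrt (Real.sqrt 2 + 2) + 32)) := by
  have hpi : 0 < π / 2 := by positivity
  have hsinc : ∀ x ∈ Icc 0 (π / 2), 0 < sinc x := fun x hx ↦
    sinc_pos ⟨hx.1, by linarith [hx.2]⟩
  rw [integral_zero_one_arctan_div_self, ← half_integral_inv_sincApprox_sqrt_fifteen_div_five,
    ← half_integral_inv_sincApprox_three_fourths]
  constructor <;> refine mul_lt_mul_of_pos_left ?_ one_half_pos
  · exact integral_inv_lt_integral_inv hpi continuous_sinc.continuousOn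
      (continuous_sincApprox _).continuousOn hsinc
      (fun x ↦ sincApprox_sqrt_fifteen_div_five_pos)
      fun x hx ↦ sinc_lt_sincApprox (by positivity) sqrt_fifteen_div_five_sq hx.1
        (by linarith [hx.2])
  · exact integral_inv_lt_integral_inv hpi (continuous_sincApprox _).continuousOn
      continuous_sinc.continuousOn (fun x ↦ sincApprox_three_fourths_pos) hsinc
      fun x hx ↦ sincApprox_lt_sinc (by norm_num) hx.1 (by nlinarith [hx.1, hx.2, pi_lt_d2])
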